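/- Let r be a real 4×4 matrix with nonnegative entries summing to 1, and set ρ = Σ_{i,j} r_{ij} Π_i⊗Π_j (first Bell projector on qubits A'B', second on A''B''). If ρ is separable across the partition A=(A',A''), B=(B',B''), then r belongs to the polytope 𝒫_s. -/

import Mathlib

open Matrix Complex
open scoped Kronecker ComplexOrder

noncomputable section
namespace Paper

abbrev Q2 := Fin 2 × Fin 2
abbrev M4 := Matrix Q2 Q2 ℂ
abbrev M16 := Matrix (Q2 × Q2) (Q2 × Q2) ℂ

/-- `1/√2` as a complex number. -/
def invSqrt2 : ℂ := ((Real.sqrt 2)⁻¹ : ℝ)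

/-- The four Bell states `|Φ₁⟩,…,|Φ₄⟩` as vectors in `ℂ²⊗ℂ²`
(product basis indexed by `Fin 2 × Fin 2`). -/
def bell : Fin 4 → Q2 → ℂ :=
  ![fun p => !![invSqrt2, 0; 0, invSqrt2] p.1 p.2,
    fun p => !![invSqrt2, 0; 0, -invSqrt2] p.1 p.2,
    fun p => !![0, invSqrt2; invSqrt2, 0] p.1 p.2,
    fun p => !![0, invSqrt2; -invSqrt2, 0] p.1 p.2]

/-- The Bell projectors `Π_i = |Φ_i⟩⟨Φ_i|`. -/
def BellProj (i : Fin 4) : M4 := vecMulVec (bell i) (star (bell i))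

/-- The Pauli matrices `σ_x, σ_y, σ_z`. -/
def pauli : Fin 3 → Matrix (Fin 2) (Fin 2) ℂ :=
  ![!![0, 1; 1, 0], !![0, -I; I, 0], !![1, 0; 0, -1]]

/-- Reindexing `((a',b'),(a'',b'')) ↦ ((a',a''),(b',b''))`. -/
def swapMid : (Q2 × Q2) ≃ (Q2 × Q2) where
  toFun p := ((p.1.1, p.2.1), (p.1.2, p.2.2))
  invFun p := ((p.1.1, p.2.1), (p.1.2, p.2.2))
  left_inv _ := rfl
  right_inv _ := rfl

/-- The rank-one matrix `x x†`. -/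
def pureMat {d : Type*} (x : d → ℂ) : Matrix d d ℂ := vecMulVec x (star x)

/-- Separability of a 16×16 four-qubit matrix (qubit order A',B',A'',B'')
across the partition A = (A',A''), B = (B',B''). -/
def SepAB (ρ : M16) : Prop :=
  ∃ (n : ℕ) (x y : Fin n → Q2 → ℂ),
    (Matrix.reindex swapMid swapMid ρ) = ∑ k, (pureMat (x k)) ⊗ₖ (pureMat (y k))


/-- The matrix `D₀ = (1/4)·I₄`. -/
def D0 : Matrix (Fin 4) (Fin 4) ℝ := (1 / 4 : ℝ) • 1

/-- The matrix `G₀` with entries `1/4` for `i,j ∈ {1,2}` and `0` otherwise. -/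
def G0 : Matrix (Fin 4) (Fin 4) ℝ :=
  !![1/4, 1/4, 0, 0; 1/4, 1/4, 0, 0; 0, 0, 0, 0; 0, 0, 0, 0]

/-- The polytope `𝒫_s`: the convex hull of all matrices obtained from `D₀` or `G₀`
by independently permuting rows and columns. -/
def Ps : Set (Matrix (Fin 4) (Fin 4) ℝ) :=
  convexHull ℝ
    {M | ∃ σ τ : Equiv.Perm (Fin 4),
      (M = fun i j => D0 (σ i) (τ j)) ∨ (M = fun i j => G0 (σ i) (τ j))}

/-!
A separable state stays positive under partial transposition, which acts on the coefficients `r`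
by `reflect`. Moreover the squared expectations, in a pure two-qubit state `x`, of five pairwise
anticommuting Pauli products add up to `‖x‖⁴`; by Cauchy–Schwarz the correlations of
a separable Bell-diagonal state are bounded accordingly.

These inequalities already force `r` into the cone over the vertices of `𝒫_s`. Up to transposing and
reflecting, some row `a` is the row or column whose weight deviates most from the average, and it
deviates upwards. The inequalities then are the cut conditions of a transport problem, whose
solution pairs part of row `a` with the other rows. The paired part is a combination of `2 × 2`
rectangles, and what remains has equal row and column sums, so Birkhoff's theorem applies.
-/

section Transport

variable {ι κ : Type*} [Fintype ι] [Fintype κ]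

/-- The squared deviation of the row sums of `q` from `p` and of its column sums from `s`. -/
def transportDefect (p : ι → ℝ) (s : κ → ℝ) (q : ι → κ → ℝ) : ℝ :=
  ∑ i, (p i - ∑ j, q i j) ^ 2 + ∑ j, (s j - ∑ i, q i j) ^ 2

lemma sum_sub_single_sq [DecidableEq ι] (a : ι → ℝ) (i : ι) (e : ℝ) :
    ∑ k, (a k - Pi.single (M := fun _ => ℝ) i e k) ^ 2 = ∑ k, a k ^ 2 - 2 * a i * e + e ^ 2 := by
  have square_expand : ∀ k, (a k - Pi.single (M := fun _ => ℝ) i e k) ^ 2 =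
      a k ^ 2 + Pi.single (M := fun _ => ℝ) i (-2 * a i * e + e ^ 2) k := by
    intro k
    obtain rfl | hk := eq_or_ne k i
    · simp only [Pi.single_eq_same]; ring
    · simp [hk]
  rw [Finset.sum_congr rfl fun k _ => square_expand k, Finset.sum_add_distrib,
    Fintype.sum_pi_single']
  ring

lemma transportDefect_add_single [DecidableEq ι] [DecidableEq κ] (p : ι → ℝ) (s : κ → ℝ)
    (q : ι → κ → ℝ) (i : ι) (j : κ) (e : ℝ) :
    transportDefect p s (q + Pi.single i (Pi.single j e)) = transportDefect p s q
      - 2 * ((p i - ∑ l, q i l) + (s j - ∑ k, q k j)) * e + 2 * e ^ 2 := by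
  have row_sum : ∀ k, p k - ∑ l, (q + Pi.single i (Pi.single j e) : ι → κ → ℝ) k l =
      p k - ∑ l, q k l - Pi.single (M := fun _ => ℝ) i e k := by
    intro k
    have : ∑ l, (Pi.single i (Pi.single j e) : ι → κ → ℝ) k l =
        Pi.single (M := fun _ => ℝ) i e k := by
      obtain rfl | hk := eq_or_ne k i <;> simp [*]
    simp only [Pi.add_apply, Finset.sum_add_distrib, this, sub_sub]
  have col_sum : ∀ l, s l - ∑ k, (q + Pi.single i (Pi.single j e) : ι → κ → ℝ) k l =
      s l - ∑ k, q k l - Pi.single (M := fun _ => ℝ) j e l := by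
    intro l
    have : ∑ k, (Pi.single i (Pi.single j e) : ι → κ → ℝ) k l =
        Pi.single (M := fun _ => ℝ) j e l := by
      rw [← Finset.sum_apply, Fintype.sum_pi_single']
    simp only [Pi.add_apply, Finset.sum_add_distrib, this, sub_sub]
  simp only [transportDefect, row_sum, col_sum, sum_sub_single_sq]
  ring

lemma eq_bound_of_forall_perturbation {x c d : ℝ} (hx : 0 ≤ x) (hxc : x ≤ c)
    (hmin : ∀ e, 0 ≤ x + e → x + e ≤ c → 0 ≤ -2 * d * e + 2 * e ^ 2) :
    (0 < d → x = c) ∧ (d < 0 → x = 0) := by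
  constructor <;> intro hd <;> by_contra hne
  · have hlt : 0 < c - x := sub_pos.2 (lt_of_le_of_ne hxc hne)
    have he : 0 < min (c - x) (d / 2) := lt_min hlt (half_pos hd)
    have := hmin (min (c - x) (d / 2)) (by linarith) (by linarith [min_le_left (c - x) (d / 2)])
    nlinarith [min_le_right (c - x) (d / 2)]
  · have hlt : 0 < x := lt_of_le_of_ne hx (Ne.symm hne)
    have he : 0 < min x (-d / 2) := lt_min hlt (by linarith)
    have := hmin (-min x (-d / 2)) (by linarith [min_le_left x (-d / 2)]) (by linarith)
    nlinarith [min_le_right x (-d / 2)]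

-- A minimiser of the defect over the box `[0, c]` is complementary slack.
lemma exists_transport_complementary_slack {c : ι → κ → ℝ} (hc : 0 ≤ c) (p : ι → ℝ)
    (s : κ → ℝ) :
    ∃ q ∈ Set.Icc 0 c, ∀ i j,
      (0 < (p i - ∑ l, q i l) + (s j - ∑ k, q k j) → q i j = c i j) ∧
      ((p i - ∑ l, q i l) + (s j - ∑ k, q k j) < 0 → q i j = 0) := by
  classical
  have defect_continuous : Continuous (transportDefect p s) := by
    unfold transportDefect; fun_prop
  obtain ⟨q, hq, q_min⟩ := isCompact_Icc.exists_isMinOn (Set.nonempty_Icc.2 hc)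
    defect_continuous.continuousOn
  refine ⟨q, hq, fun i j => eq_bound_of_forall_perturbation (hq.1 i j) (hq.2 i j) ?_⟩
  intro e he_nonneg he_le
  have perturbed_mem : q + Pi.single i (Pi.single j e) ∈ Set.Icc 0 c := by
    constructor <;> intro k l <;> obtain rfl | hk := eq_or_ne k i <;>
      obtain rfl | hl := eq_or_ne l j
    all_goals first
      | simpa using he_nonneg
      | simpa using he_le
      | simpa [*] using hq.1 _ _
      | simpa [*] using hq.2 _ _
  have := isMinOn_iff.1 q_min _ perturbed_mem
  rw [transportDefect_add_single] at this
  linarith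

lemma eq_zero_of_sum_max_le_sum_min {a : ι → ℝ} {b : κ → ℝ} (hab : ∑ i, a i = ∑ j, b j)
    (hle : ∑ i, max (a i) 0 ≤ ∑ j, min (b j) 0) : (∀ i, a i = 0) ∧ ∀ j, b j = 0 := by
  have max_nonneg : ∀ i ∈ Finset.univ, 0 ≤ max (a i) 0 := fun i _ => le_max_right _ _
  have min_nonpos : ∀ j ∈ Finset.univ, min (b j) 0 ≤ 0 := fun j _ => min_le_right _ _
  have sum_max_nonneg := Finset.sum_nonneg max_nonneg
  have sum_min_nonpos := Finset.sum_nonpos min_nonpos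
  have a_nonpos : ∀ i ∈ Finset.univ, a i ≤ 0 := fun i hi =>
    max_eq_right_iff.1 ((Finset.sum_eq_zero_iff_of_nonneg max_nonneg).1 (by linarith) i hi)
  have b_nonneg : ∀ j ∈ Finset.univ, 0 ≤ b j := fun j hj =>
    min_eq_right_iff.1 ((Finset.sum_eq_zero_iff_of_nonpos min_nonpos).1 (by linarith) j hj)
  have sum_a_nonpos := Finset.sum_nonpos a_nonpos
  have sum_b_nonneg := Finset.sum_nonneg b_nonneg
  exact ⟨fun i => (Finset.sum_eq_zero_iff_of_nonpos a_nonpos).1 (by linarith) i (Finset.mem_univ i),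
    fun j => (Finset.sum_eq_zero_iff_of_nonneg b_nonneg).1 (by linarith) j (Finset.mem_univ j)⟩

theorem exists_transport_of_cut_le {c : ι → κ → ℝ} (hc : 0 ≤ c) {p : ι → ℝ} {s : κ → ℝ}
    (hps : ∑ i, p i = ∑ j, s j)
    (hcut : ∀ I : Finset ι, ∑ i ∈ I, p i ≤ ∑ j, min (∑ i ∈ I, c i j) (s j)) :
    ∃ q ∈ Set.Icc 0 c, (∀ i, ∑ j, q i j = p i) ∧ ∀ j, ∑ i, q i j = s j := by
  classical
  obtain ⟨q, hq, slack⟩ := exists_transport_complementary_slack hc p s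
  obtain ⟨a, ha⟩ : ∃ a : ι → ℝ, ∀ i, p i - ∑ j, q i j = a i := ⟨_, fun _ => rfl⟩
  obtain ⟨b, hb⟩ : ∃ b : κ → ℝ, ∀ j, s j - ∑ i, q i j = b j := ⟨_, fun _ => rfl⟩
  simp only [ha, hb] at slack
  have sum_a_eq : ∑ i, a i = ∑ j, b j := by
    simp only [← ha, ← hb, Finset.sum_sub_distrib, hps]
    rw [Finset.sum_comm]
  have column_bound : ∀ j, min (∑ i with 0 ≤ a i, c i j) (s j) ≤
      ∑ i with 0 ≤ a i, q i j + min (b j) 0 := by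
    intro j
    obtain hj | hj := le_or_gt (b j) 0
    · have support : ∑ i with 0 ≤ a i, q i j = ∑ i, q i j :=
        Finset.sum_subset (Finset.subset_univ _) fun i _ hi =>
          (slack i j).2 (add_neg_of_neg_of_nonpos (by simpa using hi) hj)
      refine (min_le_right _ _).trans ?_
      rw [min_eq_left hj, support, ← hb, add_sub_cancel]
    · have saturated : ∑ i with 0 ≤ a i, q i j = ∑ i with 0 ≤ a i, c i j :=
        Finset.sum_congr rfl fun i hi =>
          (slack i j).1 (add_pos_of_nonneg_of_pos (by simpa using hi) hj)
      rw [min_eq_right hj.le, add_zero, saturated]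
      exact min_le_left _ _
  have sum_residual_le : ∑ i with 0 ≤ a i, a i ≤ ∑ j, min (b j) 0 := by
    have := (hcut {i | 0 ≤ a i}).trans (Finset.sum_le_sum fun j _ => column_bound j)
    rw [Finset.sum_add_distrib, Finset.sum_comm] at this
    rw [Finset.sum_congr rfl fun i _ => (ha i).symm, Finset.sum_sub_distrib]
    linarith
  have sum_residual_eq : ∑ i with 0 ≤ a i, a i = ∑ i, max (a i) 0 := by
    rw [Finset.sum_filter]
    exact Finset.sum_congr rfl fun i _ => by split_ifs <;> grind
  obtain ⟨a_zero, b_zero⟩ :=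
    eq_zero_of_sum_max_le_sum_min sum_a_eq (sum_residual_eq ▸ sum_residual_le)
  exact ⟨q, hq, fun i => (sub_eq_zero.1 ((ha i).trans (a_zero i))).symm,
    fun j => (sub_eq_zero.1 ((hb j).trans (b_zero j))).symm⟩

end Transport

section PairCone

variable {κ : Type*}

/-- The `0/1` vectors with exactly two nonzero entries. -/
def pairIndicators (κ : Type*) : Set (κ → ℝ) :=
  {v | ∃ A : Finset κ, A.card = 2 ∧ Set.indicator A 1 = v}

variable [Fintype κ]

lemma sum_le_sum_min_offDiag [DecidableEq κ] {q : κ → ℝ} (hq : ∀ j, 0 ≤ q j)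
    (hle : ∀ j, 2 * q j ≤ ∑ l, q l) (I : Finset κ) :
    ∑ i ∈ I, q i ≤ ∑ j, min (∑ i ∈ I, if i = j then 0 else ∑ l, q l) (q j) := by
  have total_nonneg : 0 ≤ ∑ l, q l := Finset.sum_nonneg fun l _ => hq l
  have le_total : ∀ j, q j ≤ ∑ l, q l := fun j => by linarith [hq j, hle j]
  obtain rfl | hI := I.eq_empty_or_nonempty
  · simp [hq]
  obtain ⟨i, rfl⟩ | hI := hI.exists_eq_singleton_or_nontrivial
  · have column : ∀ j, min (if i = j then 0 else ∑ l, q l) (q j) =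
        q j - if i = j then q j else 0 := by
      intro j
      split_ifs with h <;> simp [hq, le_total]
    simp only [Finset.sum_singleton, column, Finset.sum_sub_distrib, Finset.sum_ite_eq,
      Finset.mem_univ, if_true]
    linarith [hle i]
  · have column : ∀ j, q j ≤ min (∑ i ∈ I, if i = j then 0 else ∑ l, q l) (q j) := by
      intro j
      obtain ⟨i, hiI, hij⟩ := hI.exists_ne j
      refine le_min ((le_total j).trans ?_) le_rfl
      calc ∑ l, q l = if i = j then 0 else ∑ l, q l := (if_neg hij).symm
        _ ≤ _ := Finset.single_le_sum
          (f := fun i => if i = j then 0 else ∑ l, q l) (fun k _ => by positivity) hiI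
    exact (Finset.sum_le_univ_sum_of_nonneg hq).trans (Finset.sum_le_sum fun j _ => column j)

lemma eq_sum_smul_pair_indicator [DecidableEq κ] {w : κ → κ → ℝ} {q : κ → ℝ}
    (w_diag : ∀ i, w i i = 0) (row_sum : ∀ i, ∑ j, w i j = q i) (col_sum : ∀ j, ∑ i, w i j = q j) :
    q = ∑ i, ∑ j, (w i j / 2) • Set.indicator ({i, j} : Finset κ) 1 := by
  have pair_term : ∀ i j, (w i j / 2) • Set.indicator ({i, j} : Finset κ) (1 : κ → ℝ) =
      (w i j / 2) • (Pi.single i 1 + Pi.single j 1) := by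
    intro i j
    obtain rfl | hij := eq_or_ne i j
    · simp [w_diag]
    · ext l
      obtain rfl | hi := eq_or_ne l i <;> obtain rfl | hj := eq_or_ne l j <;> simp_all
  have half_expansion : ∑ i, (q i / 2) • (Pi.single i 1 : κ → ℝ) = (1 / 2 : ℝ) • q := by
    ext l
    simp [Pi.single_apply, div_eq_inv_mul]
  have row_half : ∑ i, ∑ j, (w i j / 2) • (Pi.single i 1 : κ → ℝ) = (1 / 2 : ℝ) • q := by
    simp only [← Finset.sum_smul, ← Finset.sum_div, row_sum, half_expansion]
  have col_half : ∑ i, ∑ j, (w i j / 2) • (Pi.single j 1 : κ → ℝ) = (1 / 2 : ℝ) • q := by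
    rw [Finset.sum_comm]
    simp only [← Finset.sum_smul, ← Finset.sum_div, col_sum, half_expansion]
  simp only [pair_term, smul_add, Finset.sum_add_distrib, row_half, col_half, ← add_smul]
  norm_num

theorem mem_hull_pairIndicators {q : κ → ℝ} (hq : ∀ j, 0 ≤ q j)
    (hle : ∀ j, 2 * q j ≤ ∑ l, q l) : q ∈ PointedCone.hull ℝ (pairIndicators κ) := by
  classical
  have total_nonneg : 0 ≤ ∑ l, q l := Finset.sum_nonneg fun l _ => hq l
  obtain ⟨w, hw, row_sum, col_sum⟩ := exists_transport_of_cut_le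
    (c := fun i j => if i = j then 0 else ∑ l, q l) (fun i j => by positivity) rfl
    (sum_le_sum_min_offDiag hq hle)
  have w_diag : ∀ i, w i i = 0 := fun i => le_antisymm (by simpa using hw.2 i i) (hw.1 i i)
  rw [eq_sum_smul_pair_indicator w_diag row_sum col_sum]
  refine Submodule.sum_mem _ fun i _ => Submodule.sum_mem _ fun j _ => ?_
  obtain rfl | hij := eq_or_ne i j
  · simp [w_diag]
  · exact PointedCone.smul_mem _ (div_nonneg (hw.1 i j) zero_le_two)
      (PointedCone.subset_hull ⟨{i, j}, Finset.card_pair hij, rfl⟩)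

end PairCone

section MarginalSums

variable {m n : Type*}

/-- The sum of the entries of row `i`. -/
def rowSum [Fintype n] (N : Matrix m n ℝ) (i : m) : ℝ := ∑ j, N i j

/-- The sum of the entries of column `j`. -/
def colSum [Fintype m] (N : Matrix m n ℝ) (j : n) : ℝ := ∑ i, N i j

/-- The sum of all entries. -/
def total [Fintype m] [Fintype n] (N : Matrix m n ℝ) : ℝ := ∑ i, ∑ j, N i j

lemma rowSum_transpose [Fintype m] (N : Matrix m n ℝ) : rowSum Nᵀ = colSum N := rfl

lemma colSum_transpose [Fintype n] (N : Matrix m n ℝ) : colSum Nᵀ = rowSum N := rfl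

lemma rowSum_submatrix [Fintype n] (N : Matrix m n ℝ) (σ : Equiv.Perm m) (τ : Equiv.Perm n)
    (i : m) : rowSum (N.submatrix σ τ) i = rowSum N (σ i) :=
  Equiv.sum_comp τ (N (σ i))

lemma colSum_submatrix [Fintype m] (N : Matrix m n ℝ) (σ : Equiv.Perm m) (τ : Equiv.Perm n)
    (j : n) : colSum (N.submatrix σ τ) j = colSum N (τ j) :=
  Equiv.sum_comp σ fun i => N i (τ j)

lemma rowSum_sub [Fintype n] (N M : Matrix m n ℝ) (i : m) :
    rowSum (N - M) i = rowSum N i - rowSum M i := by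
  simp only [rowSum, Matrix.sub_apply, Finset.sum_sub_distrib]

lemma colSum_sub [Fintype m] (N M : Matrix m n ℝ) (j : n) :
    colSum (N - M) j = colSum N j - colSum M j :=
  rowSum_sub Nᵀ Mᵀ j

variable [Fintype m] [Fintype n]

lemma sum_rowSum (N : Matrix m n ℝ) : ∑ i, rowSum N i = total N := rfl

lemma sum_colSum (N : Matrix m n ℝ) : ∑ j, colSum N j = total N := Finset.sum_comm

lemma total_transpose (N : Matrix m n ℝ) : total Nᵀ = total N := sum_colSum N

lemma total_submatrix (N : Matrix m n ℝ) (σ : Equiv.Perm m) (τ : Equiv.Perm n) :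
    total (N.submatrix σ τ) = total N := by
  simp only [← sum_rowSum, rowSum_submatrix, Equiv.sum_comp σ (rowSum N)]

lemma total_sum_smul {ι : Type*} (s : Finset ι) (w : ι → ℝ) (N : ι → Matrix m n ℝ) :
    total (∑ k ∈ s, w k • N k) = ∑ k ∈ s, w k * total (N k) := by
  simp only [total, Matrix.sum_apply, Matrix.smul_apply, smul_eq_mul, Finset.mul_sum]
  simp only [Finset.sum_comm (t := s)]

end MarginalSums

section VertexCone

variable {n : Type*}

lemma sum_of_mem_pairIndicators [Fintype n] {v : n → ℝ} (hv : v ∈ pairIndicators n) :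
    ∑ i, v i = 2 := by
  classical
  obtain ⟨A, hA, rfl⟩ := hv
  simp [Set.indicator_apply, hA]

variable [DecidableEq n]

/-- The permutation matrices and the indicator matrices of `2 × 2` rectangles: for `n = Fin 4`
these are four times the matrices whose convex hull is `Ps`. -/
def vertexMatrices (n : Type*) [DecidableEq n] : Set (Matrix n n ℝ) :=
  Set.range (fun σ : Equiv.Perm n => σ.permMatrix ℝ) ∪
    Set.image2 vecMulVec (pairIndicators n) (pairIndicators n)

/-- The convex cone spanned by `vertexMatrices n`. -/
def vertexCone (n : Type*) [DecidableEq n] : PointedCone ℝ (Matrix n n ℝ) :=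
  PointedCone.hull ℝ (vertexMatrices n)

lemma map_mem_vertexCone {f : Matrix n n ℝ →ₗ[ℝ] Matrix n n ℝ}
    (hf : Set.MapsTo f (vertexMatrices n) (vertexMatrices n)) {N : Matrix n n ℝ}
    (hN : N ∈ vertexCone n) : f N ∈ vertexCone n :=
  (Submodule.span_le (p := (vertexCone n).comap f)).2
    (fun _ hg => PointedCone.subset_hull (hf hg)) hN

lemma transpose_mem_vertexCone {N : Matrix n n ℝ} (hN : N ∈ vertexCone n) :
    Nᵀ ∈ vertexCone n := by
  refine map_mem_vertexCone (f := (transposeLinearEquiv n n ℝ ℝ).toLinearMap) ?_ hN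
  rintro _ (⟨σ, rfl⟩ | ⟨u, hu, v, hv, rfl⟩)
  · exact Or.inl ⟨σ⁻¹, (transpose_permMatrix σ).symm⟩
  · exact Or.inr ⟨v, hv, u, hu, (transpose_vecMulVec u v).symm⟩

lemma vecMulVec_mem_vertexCone {u v : n → ℝ} (hu : u ∈ pairIndicators n)
    (hv : v ∈ PointedCone.hull ℝ (pairIndicators n)) : vecMulVec u v ∈ vertexCone n :=
  (Submodule.span_le (p := (vertexCone n).comap (vecMulVecBilin ℝ ℝ u))).2
    (fun _ hw => PointedCone.subset_hull (Or.inr ⟨u, hu, _, hw, rfl⟩)) hv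

lemma mem_vertexCone_of_rowSum_eq_colSum_eq [Fintype n] {N : Matrix n n ℝ} {h : ℝ}
    (hN : ∀ i j, 0 ≤ N i j) (hh : 0 ≤ h) (hrow : ∀ i, rowSum N i = h)
    (hcol : ∀ j, colSum N j = h) : N ∈ vertexCone n := by
  obtain ⟨D, hD, rfl⟩ := (exists_mem_doublyStochastic_eq_smul_iff hh).2 ⟨hN, hrow, hcol⟩
  obtain ⟨w, hw, -, rfl⟩ := exists_eq_sum_perm_of_mem_doublyStochastic hD
  exact PointedCone.smul_mem _ hh (Submodule.sum_mem _ fun σ _ =>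
    PointedCone.smul_mem _ (hw σ) (PointedCone.subset_hull (Or.inl ⟨σ, rfl⟩)))

lemma total_permMatrix [Fintype n] (σ : Equiv.Perm n) :
    total (σ.permMatrix ℝ) = Fintype.card n := by
  simp [total, Equiv.Perm.permMatrix, PEquiv.toMatrix_apply]

lemma total_of_mem_vertexMatrices [Fintype n] (hn : Fintype.card n = 4) {N : Matrix n n ℝ}
    (hN : N ∈ vertexMatrices n) : total N = 4 := by
  obtain ⟨σ, rfl⟩ | ⟨u, hu, v, hv, rfl⟩ := hN
  · rw [total_permMatrix, hn, Nat.cast_ofNat]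
  · simp only [total, vecMulVec_apply, ← Finset.mul_sum, ← Finset.sum_mul,
      sum_of_mem_pairIndicators, hu, hv]
    norm_num

end VertexCone

section Polytope

lemma exists_perm_mem_pair_iff {A : Finset (Fin 4)} (hA : A.card = 2) :
    ∃ σ : Equiv.Perm (Fin 4), ∀ i, i ∈ A ↔ (σ i = 0 ∨ σ i = 1) := by
  revert A
  decide

lemma G0_apply (i j : Fin 4) :
    G0 i j = if (i = 0 ∨ i = 1) ∧ (j = 0 ∨ j = 1) then 1 / 4 else 0 := by
  fin_cases i <;> fin_cases j <;> simp [G0]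

lemma quarter_smul_mem_Ps {N : Matrix (Fin 4) (Fin 4) ℝ} (hN : N ∈ vertexMatrices (Fin 4)) :
    (1 / 4 : ℝ) • N ∈ Ps := by
  refine subset_convexHull ℝ _ ?_
  obtain ⟨σ, rfl⟩ | ⟨_, ⟨A, hA, rfl⟩, _, ⟨B, hB, rfl⟩, rfl⟩ := hN
  · refine ⟨σ, 1, Or.inl ?_⟩
    ext i j
    simp [D0, Equiv.Perm.permMatrix, PEquiv.toMatrix_apply, Matrix.one_apply, eq_comm]
  · obtain ⟨σ, hσ⟩ := exists_perm_mem_pair_iff hA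
    obtain ⟨τ, hτ⟩ := exists_perm_mem_pair_iff hB
    refine ⟨σ, τ, Or.inr ?_⟩
    ext i j
    simp [G0_apply, ← hσ, ← hτ, vecMulVec_apply, Set.indicator_apply, ← ite_and, and_comm]

theorem mem_Ps_of_mem_vertexCone {N : Matrix (Fin 4) (Fin 4) ℝ} (hN : N ∈ vertexCone (Fin 4))
    (htotal : total N = 1) : N ∈ Ps := by
  obtain ⟨w, w_supp, w_nonneg, rfl⟩ := PointedCone.mem_hull_set.1 hN
  have w_sum : ∑ M ∈ w.support, 4 * w M = 1 := by
    rw [← htotal, Finsupp.sum, total_sum_smul]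
    exact Finset.sum_congr rfl fun M hM => by
      rw [total_of_mem_vertexMatrices (Fintype.card_fin 4) (w_supp hM), mul_comm]
  have quarter_sum : w.sum (fun M c => c • M) =
      ∑ M ∈ w.support, (4 * w M) • ((1 / 4 : ℝ) • M) :=
    Finset.sum_congr rfl fun M _ => by rw [smul_smul]; congr 1; ring
  rw [quarter_sum]
  exact (convex_convexHull ℝ _).sum_mem (fun M _ => mul_nonneg zero_le_four (w_nonneg M)) w_sum
    fun M hM => quarter_smul_mem_Ps (w_supp hM)

end Polytope

section Reflection

/-- The matrix `½ J - 1`, an orthogonal involution of `ℝ⁴`. Up to reversing the order of the Bell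
states it is the action of partial transposition on Bell-diagonal coefficients. -/
def reflection : Matrix (Fin 4) (Fin 4) ℝ := (of fun _ _ => 1 / 2) - 1

/-- Conjugation of a coefficient matrix by `reflection`. -/
def reflect (N : Matrix (Fin 4) (Fin 4) ℝ) : Matrix (Fin 4) (Fin 4) ℝ :=
  reflection * N * reflection

lemma reflection_mul_apply (N : Matrix (Fin 4) (Fin 4) ℝ) (i j : Fin 4) :
    (reflection * N) i j = colSum N j / 2 - N i j := by
  rw [reflection, Matrix.sub_mul, Matrix.one_mul, Matrix.sub_apply, Matrix.mul_apply]
  simp [colSum, ← Finset.mul_sum, div_eq_inv_mul]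

lemma mul_reflection_apply (N : Matrix (Fin 4) (Fin 4) ℝ) (i j : Fin 4) :
    (N * reflection) i j = rowSum N i / 2 - N i j := by
  rw [reflection, Matrix.mul_sub, Matrix.mul_one, Matrix.sub_apply, Matrix.mul_apply]
  simp [rowSum, ← Finset.sum_mul, div_eq_mul_inv]

lemma reflection_mul_reflection : reflection * reflection = 1 := by
  ext i j
  have col_sum : colSum reflection j = 1 := by
    norm_num [colSum, reflection, Matrix.one_apply]
  rw [reflection_mul_apply, col_sum]
  simp [reflection]

lemma transpose_reflection : reflectionᵀ = reflection := by
  ext i j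
  simp [reflection, Matrix.one_apply, eq_comm]

lemma reflection_submatrix (σ : Equiv.Perm (Fin 4)) :
    reflection.submatrix σ σ = reflection := by
  ext i j
  simp [reflection, Matrix.one_apply]

lemma reflection_mulVec (v : Fin 4 → ℝ) (i : Fin 4) :
    (reflection *ᵥ v) i = (∑ k, v k) / 2 - v i := by
  rw [reflection, sub_mulVec, one_mulVec, Pi.sub_apply]
  simp [mulVec, dotProduct, ← Finset.mul_sum, div_eq_inv_mul]

lemma reflect_reflect (N : Matrix (Fin 4) (Fin 4) ℝ) : reflect (reflect N) = N := by
  simp only [reflect, Matrix.mul_assoc, reflection_mul_reflection, Matrix.mul_one]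
  rw [← Matrix.mul_assoc, reflection_mul_reflection, Matrix.one_mul]

lemma reflect_one : reflect 1 = 1 := by
  rw [reflect, Matrix.mul_one, reflection_mul_reflection]

lemma reflect_transpose (N : Matrix (Fin 4) (Fin 4) ℝ) : reflect Nᵀ = (reflect N)ᵀ := by
  simp only [reflect, transpose_mul, transpose_reflection, Matrix.mul_assoc]

lemma reflect_submatrix (N : Matrix (Fin 4) (Fin 4) ℝ) (σ τ : Equiv.Perm (Fin 4)) :
    reflect (N.submatrix σ τ) = (reflect N).submatrix σ τ := by
  rw [reflect, reflect, submatrix_mul _ _ σ τ τ τ.bijective, submatrix_mul _ _ σ σ τ σ.bijective,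
    reflection_submatrix, reflection_submatrix]

lemma reflect_apply (N : Matrix (Fin 4) (Fin 4) ℝ) (i j : Fin 4) :
    reflect N i j = total N / 4 - rowSum N i / 2 - colSum N j / 2 + N i j := by
  have row_sum : rowSum (reflection * N) i = total N / 2 - rowSum N i := by
    simp only [rowSum, reflection_mul_apply, Finset.sum_sub_distrib, ← Finset.sum_div, sum_colSum]
  rw [reflect, mul_reflection_apply, row_sum, reflection_mul_apply]
  ring

lemma rowSum_reflect (N : Matrix (Fin 4) (Fin 4) ℝ) (i : Fin 4) :
    rowSum (reflect N) i = total N / 2 - rowSum N i := by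
  simp only [rowSum, reflect_apply, Finset.sum_add_distrib, Finset.sum_sub_distrib,
    ← Finset.sum_div, sum_colSum, Finset.sum_const, Finset.card_fin, nsmul_eq_mul]
  push_cast
  ring

lemma colSum_reflect (N : Matrix (Fin 4) (Fin 4) ℝ) (j : Fin 4) :
    colSum (reflect N) j = total N / 2 - colSum N j := by
  rw [← rowSum_transpose, ← reflect_transpose, rowSum_reflect, total_transpose, rowSum_transpose]

lemma total_reflect (N : Matrix (Fin 4) (Fin 4) ℝ) : total (reflect N) = total N := by
  rw [← sum_rowSum]
  simp only [rowSum_reflect, Finset.sum_sub_distrib, sum_rowSum, Finset.sum_const,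
    Finset.card_fin, nsmul_eq_mul]
  push_cast
  ring

lemma reflection_mulVec_mem_pairIndicators {v : Fin 4 → ℝ} (hv : v ∈ pairIndicators (Fin 4)) :
    reflection *ᵥ v ∈ pairIndicators (Fin 4) := by
  have v_sum := sum_of_mem_pairIndicators hv
  obtain ⟨A, hA, rfl⟩ := hv
  refine ⟨Aᶜ, by rw [Finset.card_compl, hA, Fintype.card_fin], ?_⟩
  ext i
  rw [reflection_mulVec, v_sum]
  by_cases hi : i ∈ A <;> simp [hi]

lemma reflect_mem_vertexCone {N : Matrix (Fin 4) (Fin 4) ℝ} (hN : N ∈ vertexCone (Fin 4)) :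
    reflect N ∈ vertexCone (Fin 4) := by
  refine map_mem_vertexCone
    (f := LinearMap.mulRight ℝ reflection ∘ₗ LinearMap.mulLeft ℝ reflection) ?_ hN
  rintro _ (⟨σ, rfl⟩ | ⟨u, hu, v, hv, rfl⟩)
  · refine Or.inl ⟨σ, ?_⟩
    change σ.permMatrix ℝ = reflect (σ.permMatrix ℝ)
    rw [Equiv.Perm.permMatrix, PEquiv.toMatrix_toPEquiv_eq]
    exact (congrArg (fun M => M.submatrix σ id) reflect_one).symm.trans
      (reflect_submatrix 1 σ 1).symm
  · refine Or.inr ⟨_, reflection_mulVec_mem_pairIndicators hu, _,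
      reflection_mulVec_mem_pairIndicators hv, ?_⟩
    change _ = reflect (vecMulVec u v)
    rw [reflect, mul_vecMulVec, vecMulVec_mul, ← mulVec_transpose, transpose_reflection]

end Reflection

section Correlations

/-- The real Pauli matrices `1, σ_z, σ_x, iσ_y`, with complex entries. -/
def realPauli : Fin 4 → Matrix (Fin 2) (Fin 2) ℂ :=
  ![1, !![1, 0; 0, -1], !![0, 1; 1, 0], !![0, 1; -1, 0]]

/-- The character table of the Klein four-group: `character k i` is the eigenvalue of
`realPauli k ⊗ realPauli k` on the Bell state `i`. -/
def character : Matrix (Fin 4) (Fin 4) ℤ :=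
  !![1, 1, 1, 1; 1, 1, -1, -1; 1, -1, 1, -1; 1, -1, -1, 1]

/-- `character` with real entries. -/
def realCharacter : Matrix (Fin 4) (Fin 4) ℝ := character.map (↑)

/-- The matrix of correlations `⟨P_k ⊗ P_l ⊗ P_k ⊗ P_l⟩` of the Bell-diagonal state with
coefficients `N`, where `P = realPauli` and the qubits are ordered A', A'', B', B''. -/
def corr (N : Matrix (Fin 4) (Fin 4) ℝ) : Matrix (Fin 4) (Fin 4) ℝ :=
  realCharacter * N * realCharacterᵀ

lemma corr_apply (N : Matrix (Fin 4) (Fin 4) ℝ) (k l : Fin 4) :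
    corr N k l = ∑ i, ∑ j, character k i * character l j * N i j := by
  simp only [corr, realCharacter, Matrix.mul_apply, transpose_apply, map_apply, Finset.sum_mul]
  rw [Finset.sum_comm]
  exact Finset.sum_congr rfl fun i _ => Finset.sum_congr rfl fun j _ => by ring

lemma character_zero : ∀ i, character 0 i = 1 := by decide

lemma corr_zero_zero (N : Matrix (Fin 4) (Fin 4) ℝ) : corr N 0 0 = total N := by
  simp [corr_apply, total, character_zero]

lemma abs_mul_mul_units (ε δ : ℤˣ) (x : ℝ) : |((ε : ℤ) : ℝ) * x * ((δ : ℤ) : ℝ)| = |x| := by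
  obtain rfl | rfl := Int.units_eq_one_or ε <;> obtain rfl | rfl := Int.units_eq_one_or δ <;> simp

-- `reflection` fixes the trivial character and negates the other three.
lemma exists_sign_character_mul_reflection (k : Fin 4) : ∃ ε : ℤˣ, ∀ i,
    (realCharacter * reflection) k i = (ε : ℤ) * realCharacter k i := by
  have row_sum : ∀ k, ∃ ε : ℤˣ, ∀ i,
      ∑ j, character k j = 2 * (ε * character k i + character k i) := by
    decide
  obtain ⟨ε, hε⟩ := row_sum k
  refine ⟨ε, fun i => ?_⟩
  have rowSum_eq : rowSum realCharacter k =
      2 * ((ε : ℤ) * realCharacter k i + realCharacter k i) := by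
    simp only [rowSum, realCharacter, map_apply]
    exact_mod_cast hε i
  rw [mul_reflection_apply, rowSum_eq]
  ring

lemma abs_corr_reflect (N : Matrix (Fin 4) (Fin 4) ℝ) (k l : Fin 4) :
    |corr (reflect N) k l| = |corr N k l| := by
  choose ε hε using exists_sign_character_mul_reflection
  have factor : realCharacter * reflection =
      diagonal (fun k => ((ε k : ℤ) : ℝ)) * realCharacter := by
    ext k i
    rw [hε, diagonal_mul]
  have conjugate : corr (reflect N) =
      diagonal (fun k => ((ε k : ℤ) : ℝ)) * corr N * diagonal (fun k => ((ε k : ℤ) : ℝ)) := by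
    calc corr (reflect N)
        = (realCharacter * reflection) * N * (realCharacter * reflection)ᵀ := by
          simp only [corr, reflect, transpose_mul, transpose_reflection, Matrix.mul_assoc]
      _ = _ := by
          rw [factor]
          simp only [corr, transpose_mul, diagonal_transpose, Matrix.mul_assoc]
  rw [conjugate, mul_diagonal, diagonal_mul, abs_mul_mul_units]

lemma exists_perm_character_comp : ∀ σ : Equiv.Perm (Fin 4), ∃ π : Equiv.Perm (Fin 4), π 0 = 0 ∧
    ∀ k, ∃ ε : ℤˣ, ∀ i, character k (σ i) = ε * character (π k) i := by
  decide

lemma exists_perm_abs_corr_submatrix (σ τ : Equiv.Perm (Fin 4)) :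
    ∃ π ν : Equiv.Perm (Fin 4), π 0 = 0 ∧ ν 0 = 0 ∧
      ∀ N k l, |corr (N.submatrix σ τ) k l| = |corr N (π k) (ν l)| := by
  obtain ⟨π, π_zero, hπ⟩ := exists_perm_character_comp σ⁻¹
  obtain ⟨ν, ν_zero, hν⟩ := exists_perm_character_comp τ⁻¹
  choose ε hε using hπ
  choose δ hδ using hν
  refine ⟨π, ν, π_zero, ν_zero, fun N k l => ?_⟩
  have corr_eq : corr (N.submatrix σ τ) k l = (ε k : ℤ) * corr N (π k) (ν l) * (δ l : ℤ) := by
    calc corr (N.submatrix σ τ) k l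
        = ∑ i, ∑ j, character k (σ⁻¹ i) * character l (τ⁻¹ j) * N i j := by
          rw [corr_apply, ← Equiv.sum_comp σ fun i => ∑ j,
            (character k (σ⁻¹ i) : ℝ) * character l (τ⁻¹ j) * N i j]
          refine Finset.sum_congr rfl fun i _ => ?_
          rw [← Equiv.sum_comp τ fun j =>
            (character k (σ⁻¹ (σ i)) : ℝ) * character l (τ⁻¹ j) * N (σ i) j]
          simp
      _ = _ := by
          simp only [hε, hδ, corr_apply, Finset.mul_sum, Finset.sum_mul]
          push_cast
          exact Finset.sum_congr rfl fun i _ => Finset.sum_congr rfl fun j _ => by ring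
  rw [corr_eq, abs_mul_mul_units]

/-- The labels `(k, l')` of five pairwise anticommuting products `P_k ⊗ P_l'` of Pauli matrices. -/
def quintuple (l : Fin 4) : Finset (Fin 4 × Fin 4) :=
  {p | p.1 = 0 ∧ p.2 ≠ 0 ∧ p.2 ≠ l ∨ p.1 ≠ 0 ∧ p.2 = l}

/-- The uncertainty relations of `quintuple l` and of its complement, as bounds on the
correlations. -/
def CorrelationBounds (N : Matrix (Fin 4) (Fin 4) ℝ) : Prop :=
  ∀ l ≠ 0, ∑ p ∈ quintuple l, |corr N p.1 p.2| ≤ total N ∧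
    ∑ p ∈ (quintuple l)ᶜ, |corr N p.1 p.2| ≤ 3 * total N

namespace CorrelationBounds

variable {N : Matrix (Fin 4) (Fin 4) ℝ}

protected lemma reflect (h : CorrelationBounds N) : CorrelationBounds (reflect N) := by
  simpa only [CorrelationBounds, abs_corr_reflect, total_reflect] using h

protected lemma submatrix (h : CorrelationBounds N) (σ τ : Equiv.Perm (Fin 4)) :
    CorrelationBounds (N.submatrix σ τ) := by
  obtain ⟨π, ν, π_zero, ν_zero, abs_corr⟩ := exists_perm_abs_corr_submatrix σ τ
  have π_eq_zero : ∀ k, π k = 0 ↔ k = 0 := fun k => by rw [← π_zero, π.injective.eq_iff, π_zero]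
  have ν_eq_zero : ∀ l, ν l = 0 ↔ l = 0 := fun l => by rw [← ν_zero, ν.injective.eq_iff, ν_zero]
  have mem_quintuple : ∀ l p, p ∈ quintuple l ↔ Equiv.prodCongr π ν p ∈ quintuple (ν l) := by
    simp [quintuple, π_eq_zero, ν_eq_zero]
  intro l hl
  obtain ⟨quintuple_le, compl_le⟩ := h (ν l) (by rwa [Ne, ν_eq_zero])
  rw [total_submatrix]
  refine ⟨le_of_eq_of_le ?_ quintuple_le, le_of_eq_of_le ?_ compl_le⟩
  · exact Finset.sum_equiv (Equiv.prodCongr π ν) (mem_quintuple l) fun p _ => abs_corr N p.1 p.2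
  · exact Finset.sum_equiv (Equiv.prodCongr π ν)
      (fun p => by simpa using (mem_quintuple l p).not) fun p _ => abs_corr N p.1 p.2

end CorrelationBounds

/-- The inequalities satisfied by the coefficients of a separable Bell-diagonal state: positivity
of the state and of its partial transpose, and the uncertainty relations for its
correlations. -/
structure FacetInequalities (N : Matrix (Fin 4) (Fin 4) ℝ) : Prop where
  nonneg : ∀ i j, 0 ≤ N i j
  reflect_nonneg : ∀ i j, 0 ≤ reflect N i j
  corr_le : CorrelationBounds N
  corr_transpose_le : CorrelationBounds Nᵀ

lemma injective_vec_three {n : Type*} {x y z : n} (hxy : x ≠ y) (hxz : x ≠ z) (hyz : y ≠ z) :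
    Function.Injective ![x, y, z] := by
  simp [Function.Injective, Fin.forall_fin_succ, hxy, hxz, hyz, hxy.symm, hxz.symm, hyz.symm]

lemma exists_perm_comp_eq {m : ℕ} {n : Type*} [Finite n] {x y : Fin m → n}
    (hx : Function.Injective x) (hy : Function.Injective y) :
    ∃ σ : Equiv.Perm n, ∀ i, σ (x i) = y i := by
  have := Equiv.Perm.isMultiplyPretransitive n m
  obtain ⟨σ, hσ⟩ := MulAction.exists_smul_eq (Equiv.Perm n) (⟨x, hx⟩ : Fin m ↪ n) ⟨y, hy⟩
  exact ⟨σ, fun i => DFunLike.congr_fun hσ i⟩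

namespace FacetInequalities

variable {N : Matrix (Fin 4) (Fin 4) ℝ}

protected lemma transpose (h : FacetInequalities N) : FacetInequalities Nᵀ where
  nonneg i j := h.nonneg j i
  reflect_nonneg i j := by rw [reflect_transpose]; exact h.reflect_nonneg j i
  corr_le := h.corr_transpose_le
  corr_transpose_le := h.corr_le

protected lemma reflect (h : FacetInequalities N) : FacetInequalities (reflect N) where
  nonneg := h.reflect_nonneg
  reflect_nonneg := by rw [reflect_reflect]; exact h.nonneg
  corr_le := h.corr_le.reflect
  corr_transpose_le := by rw [← reflect_transpose]; exact h.corr_transpose_le.reflect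

end FacetInequalities

namespace CorrelationBounds

variable {N : Matrix (Fin 4) (Fin 4) ℝ}

lemma two_mul_add_le_of_zero_one (h : CorrelationBounds N) :
    2 * N 0 0 + 2 * N 0 1 ≤ rowSum N 0 + colSum N 0 := by
  have bound := (h 1 (by decide)).1
  rw [show quintuple 1 = {(0, 2), (0, 3), (1, 1), (2, 1), (3, 1)} by decide] at bound
  have signed : -corr N 0 2 - corr N 0 3 + corr N 1 1 + corr N 2 1 + corr N 3 1 ≤ total N := by
    refine le_trans ?_ bound
    simp only [Finset.sum_insert, Finset.sum_singleton, Finset.mem_insert, Finset.mem_singleton,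
      Prod.mk.injEq, Fin.reduceEq, and_false, and_true, or_self, not_false_eq_true, zero_ne_one]
    linarith [neg_le_abs (corr N 0 2), neg_le_abs (corr N 0 3), le_abs_self (corr N 1 1),
      le_abs_self (corr N 2 1), le_abs_self (corr N 3 1)]
  simp only [corr_apply, total, Fin.sum_univ_four, character, of_apply, cons_val', cons_val_zero,
    cons_val_one, cons_val, cons_val_fin_one, Int.cast_one, Int.cast_neg] at signed
  simp only [rowSum, colSum, Fin.sum_univ_four]
  linarith

lemma four_mul_add_le_of_one_two (h : CorrelationBounds N) :
    4 * (N 1 0 + N 1 3 + N 2 1 + N 2 3) ≤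
      2 * rowSum N 1 + 2 * rowSum N 2 - 2 * rowSum N 0 + total N + 2 * colSum N 3 := by
  have bound := (h 1 (by decide)).2
  rw [show (quintuple 1)ᶜ = {(0, 0), (0, 1), (1, 0), (2, 0), (3, 0), (1, 2), (1, 3), (3, 2),
    (2, 2), (2, 3), (3, 3)} by decide] at bound
  have signed : corr N 0 0 + corr N 0 1 + corr N 1 0 + corr N 2 0 + corr N 3 0 + corr N 1 2
      + corr N 1 3 + corr N 3 2 - corr N 2 2 - corr N 2 3 - corr N 3 3 ≤ 3 * total N := by
    refine le_trans ?_ bound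
    simp only [Finset.sum_insert, Finset.sum_singleton, Finset.mem_insert, Finset.mem_singleton,
      Prod.mk.injEq, Fin.reduceEq, and_false, and_true, or_self, not_false_eq_true, zero_ne_one,
      one_ne_zero]
    linarith [le_abs_self (corr N 0 0), le_abs_self (corr N 0 1), le_abs_self (corr N 1 0),
      le_abs_self (corr N 2 0), le_abs_self (corr N 3 0), le_abs_self (corr N 1 2),
      le_abs_self (corr N 1 3), le_abs_self (corr N 3 2), neg_le_abs (corr N 2 2),
      neg_le_abs (corr N 2 3), neg_le_abs (corr N 3 3)]
  simp only [corr_apply, total, Fin.sum_univ_four, character, of_apply, cons_val', cons_val_zero,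
    cons_val_one, cons_val, cons_val_fin_one, Int.cast_one, Int.cast_neg] at signed
  simp only [total, rowSum, colSum, Fin.sum_univ_four]
  linarith

lemma two_mul_add_le (h : CorrelationBounds N) (i : Fin 4) {j j' : Fin 4} (hj : j ≠ j') :
    2 * N i j + 2 * N i j' ≤ rowSum N i + colSum N j := by
  obtain ⟨τ, hτ⟩ := exists_perm_comp_eq (x := ![0, 1]) (y := ![j, j']) (by decide) (by simpa)
  have standard := (h.submatrix (Equiv.swap 0 i) τ).two_mul_add_le_of_zero_one
  simpa [rowSum_submatrix, colSum_submatrix, show τ 0 = j from hτ 0, show τ 1 = j' from hτ 1]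
    using standard

lemma four_mul_add_le (h : CorrelationBounds N) {a i i' j j' l : Fin 4}
    (hai : a ≠ i) (hai' : a ≠ i') (hi : i ≠ i') (hj : j ≠ j') (hjl : j ≠ l) (hjl' : j' ≠ l) :
    4 * (N i j + N i l + N i' j' + N i' l) ≤
      2 * rowSum N i + 2 * rowSum N i' - 2 * rowSum N a + total N + 2 * colSum N l := by
  obtain ⟨σ, hσ⟩ := exists_perm_comp_eq (x := ![0, 1, 2]) (by decide)
    (injective_vec_three hai hai' hi)
  obtain ⟨τ, hτ⟩ := exists_perm_comp_eq (x := ![0, 1, 3]) (by decide)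
    (injective_vec_three hj hjl hjl')
  have standard := (h.submatrix σ τ).four_mul_add_le_of_one_two
  simpa [rowSum_submatrix, colSum_submatrix, total_submatrix, show σ 0 = a from hσ 0,
    show σ 1 = i from hσ 1, show σ 2 = i' from hσ 2, show τ 0 = j from hτ 0,
    show τ 1 = j' from hτ 1, show τ 3 = l from hτ 2] using standard

end CorrelationBounds

end Correlations

section SumsOfMinima

variable {κ : Type*} [DecidableEq κ] {s : Finset κ} {u v : κ → ℝ}

lemma sum_min_cases (s : Finset κ) (u v : κ → ℝ) :
    ∑ j ∈ s, min (u j) (v j) = ∑ j ∈ s, u j ∨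
      (∃ i ∈ s, ∑ j ∈ s, min (u j) (v j) = v i + ∑ j ∈ s.erase i, u j) ∨
      ∃ i ∈ s, ∃ i' ∈ s.erase i, min (u i) (v i) = v i ∧ min (u i') (v i') = v i' := by
  by_cases all_left : ∀ j ∈ s, u j ≤ v j
  · exact Or.inl (Finset.sum_congr rfl fun j hj => min_eq_left (all_left j hj))
  push Not at all_left
  obtain ⟨i, hi, right_i⟩ := all_left
  refine Or.inr ?_
  by_cases rest_left : ∀ j ∈ s.erase i, u j ≤ v j
  · refine Or.inl ⟨i, hi, ?_⟩
    rw [← Finset.add_sum_erase s _ hi, min_eq_right right_i.le,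
      Finset.sum_congr rfl fun j hj => min_eq_left (rest_left j hj)]
  · push Not at rest_left
    obtain ⟨i', hi', right_i'⟩ := rest_left
    exact Or.inr ⟨i, hi, i', hi', min_eq_right right_i.le, min_eq_right right_i'.le⟩

lemma le_sum_min_of_card_le {m : ℕ} {t R : ℝ} (hcard : s.card ≤ m + 2) (ht : 0 ≤ t)
    (hvu : ∀ j ∈ s, v j ≤ u j + t) (hv : R + m * t ≤ ∑ j ∈ s, v j) (hu : R ≤ ∑ j ∈ s, u j)
    (hone : ∀ i ∈ s, R ≤ v i + ∑ j ∈ s.erase i, u j) : R ≤ ∑ j ∈ s, min (u j) (v j) := by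
  obtain h | ⟨i, hi, h⟩ | ⟨i, hi, i', hi', min_i, min_i'⟩ := sum_min_cases s u v
  · rwa [h]
  · rw [h]
    exact hone i hi
  · have rest_card : (((s.erase i).erase i').card : ℝ) ≤ m := by
      rw [Finset.card_erase_of_mem hi', Finset.card_erase_of_mem hi]
      exact_mod_cast (by omega : s.card - 1 - 1 ≤ m)
    have rest_le : ∑ j ∈ (s.erase i).erase i', v j - m * t ≤
        ∑ j ∈ (s.erase i).erase i', min (u j) (v j) :=
      calc ∑ j ∈ (s.erase i).erase i', v j - m * t
          ≤ ∑ j ∈ (s.erase i).erase i', v j - ((s.erase i).erase i').card * t := by gcongr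
        _ = ∑ j ∈ (s.erase i).erase i', (v j - t) := by simp
        _ ≤ _ := Finset.sum_le_sum fun j hj => le_min
            (by linarith [hvu j (Finset.mem_of_mem_erase (Finset.mem_of_mem_erase hj))])
            (by linarith)
    rw [← Finset.add_sum_erase s v hi, ← Finset.add_sum_erase _ v hi'] at hv
    rw [← Finset.add_sum_erase s _ hi, ← Finset.add_sum_erase _ _ hi', min_i, min_i']
    linarith

lemma exists_sum_eq_add_add {ι : Type*} [Fintype ι] (hι : Fintype.card ι = 3) {i i' : ι}
    (hi : i ≠ i') : ∃ m, ∀ f : ι → ℝ, ∑ j, f j = f i + f i' + f m := by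
  classical
  have hcompl : ({i, i'} : Finset ι)ᶜ.card = 1 := by
    rw [Finset.card_compl, hι, Finset.card_pair hi]
  obtain ⟨m, hm⟩ := Finset.card_eq_one.1 hcompl
  refine ⟨m, fun f => ?_⟩
  rw [← Finset.sum_add_sum_compl {i, i'} f, hm, Finset.sum_pair hi, Finset.sum_singleton]

end SumsOfMinima

section Pairing

/-- Inequalities under which the rows of `n` contain a transport plan `q ≤ n` with row sums `p` and
column sums `k` none of whose entries exceeds half its row sum. They are instances of
`FacetInequalities` for a matrix whose row `a` is dominant: `n` consists of the other
rows, `h` is the part of each of them left to permutation matrices, and `p i` the weight of the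
`2 × 2` rectangles on the rows `a` and `i`. -/
structure PairingConditions {ι κ : Type*} [Fintype ι] [Fintype κ] (n : Matrix ι κ ℝ) (p : ι → ℝ)
    (k : κ → ℝ) (h : ℝ) : Prop where
  nonneg : ∀ i j, 0 ≤ n i j
  p_nonneg : ∀ i, 0 ≤ p i
  k_nonneg : ∀ j, 0 ≤ k j
  h_nonneg : 0 ≤ h
  sum_eq : ∑ i, p i = ∑ j, k j
  rowSum_eq : ∀ i, rowSum n i = p i + h
  le_colSum : ∀ j, k j ≤ colSum n j
  colSum_le : ∀ j, colSum n j ≤ k j + h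
  two_mul_le : ∀ j, 2 * k j ≤ ∑ i, p i
  add_le_entry : ∀ i j, 2 * k j + p i ≤ 2 * n i j + ∑ i, p i
  entry_le : ∀ i j, 2 * n i j ≤ p i + 2 * h
  add_entry_le_row : ∀ i j j', j ≠ j' → 2 * (n i j + n i j') ≤ p i + 2 * h + 2 * k j
  add_entry_le_col : ∀ i j, 2 * (k j + n i j) ≤ p i + 2 * colSum n j
  add_entries_le : ∀ i i' j j' l, i ≠ i' → j ≠ j' → j ≠ l → j' ≠ l →
    2 * (n i j + n i l + n i' j' + n i' l) ≤ p i + p i' + 4 * h + 2 * k l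

namespace PairingConditions

variable {ι κ : Type*} [Fintype ι] [Fintype κ]
  {n : Matrix ι κ ℝ} {p : ι → ℝ} {k : κ → ℝ} {h : ℝ}

lemma p_le_sum (H : PairingConditions n p k h) (i : ι) : p i ≤ ∑ i, p i :=
  Finset.single_le_sum (fun i _ => H.p_nonneg i) (Finset.mem_univ i)

lemma entry_le_add (H : PairingConditions n p k h) (i : ι) (j : κ) : n i j ≤ k j + h :=
  (Finset.single_le_sum (fun i _ => H.nonneg i j) (Finset.mem_univ i)).trans (H.colSum_le j)

lemma entry_add_entry_le (H : PairingConditions n p k h) {i i' : ι} (hi : i ≠ i') (j : κ) :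
    n i j + n i' j ≤ k j + h :=
  (Finset.add_le_sum (fun i _ => H.nonneg i j) (Finset.mem_univ i) (Finset.mem_univ i') hi).trans
    (H.colSum_le j)

lemma le_sum_min_col (H : PairingConditions n p k h) (hι : Fintype.card ι = 3)
    (j : κ) : k j ≤ ∑ i, min (n i j) (p i / 2) := by
  classical
  refine le_sum_min_of_card_le (m := 1) (t := (∑ i, p i) / 2 - k j) (by simp [hι])
    (by linarith [H.two_mul_le j]) (fun i _ => by linarith [H.add_le_entry i j])
    (by rw [← Finset.sum_div]; linarith) (H.le_colSum j) fun i _ => ?_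
  have colSum_eq : n i j + ∑ i' ∈ Finset.univ.erase i, n i' j = colSum n j :=
    Finset.add_sum_erase _ (n · j) (Finset.mem_univ i)
  linarith [H.add_entry_le_col i j]

lemma sum_erase_eq [DecidableEq κ] (H : PairingConditions n p k h) (i : ι) (j : κ) :
    ∑ l ∈ Finset.univ.erase j, n i l = p i + h - n i j := by
  rw [eq_sub_iff_add_eq', Finset.add_sum_erase _ (n i) (Finset.mem_univ j)]
  exact H.rowSum_eq i

lemma sum_erase_erase_eq [DecidableEq κ] (H : PairingConditions n p k h) (i : ι) {j l : κ}
    (hl : l ∈ Finset.univ.erase j) :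
    ∑ l' ∈ (Finset.univ.erase j).erase l, n i l' = p i + h - n i j - n i l := by
  rw [eq_sub_iff_add_eq', Finset.add_sum_erase _ (n i) hl, H.sum_erase_eq]

lemma le_sum_min_row (H : PairingConditions n p k h) (hκ : Fintype.card κ = 4) (i : ι) :
    p i ≤ ∑ j, min (n i j) (k j) := by
  classical
  refine le_sum_min_of_card_le (m := 2) (t := (∑ i, p i - p i) / 2) (by simp [hκ])
    (by linarith [H.p_le_sum i]) (fun j _ => by linarith [H.add_le_entry i j])
    (by rw [H.sum_eq]; push_cast; linarith) ?_ fun j _ => ?_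
  · linarith [H.h_nonneg, show ∑ j, n i j = p i + h from H.rowSum_eq i]
  · linarith [H.sum_erase_eq i j, H.entry_le_add i j]

lemma half_le_sum_erase_min_row [DecidableEq κ] (H : PairingConditions n p k h)
    (hκ : Fintype.card κ = 4) (i : ι) (j : κ) :
    p i / 2 ≤ ∑ l ∈ Finset.univ.erase j, min (n i l) (k l) := by
  have sum_k : k j + ∑ l ∈ Finset.univ.erase j, k l = ∑ i, p i := by
    rw [Finset.add_sum_erase _ k (Finset.mem_univ j), H.sum_eq]
  refine le_sum_min_of_card_le (m := 1) (t := (∑ i, p i - p i) / 2)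
    (by simp [Finset.card_erase_of_mem, hκ]) (by linarith [H.p_le_sum i])
    (fun l _ => by linarith [H.add_le_entry i l]) (by push_cast; linarith [H.two_mul_le j]) ?_
    fun l hl => ?_
  · linarith [H.sum_erase_eq i j, H.entry_le i j]
  · linarith [H.sum_erase_erase_eq i hl, H.add_entry_le_row i l j (Finset.ne_of_mem_erase hl)]

lemma one_row_cut (H : PairingConditions n p k h) (hκ : Fintype.card κ = 4) (i : ι) :
    p i ≤ ∑ j, min (min (n i j) (p i / 2)) (k j) := by
  classical
  simp only [min_right_comm]
  obtain eq_sum | ⟨j, -, eq_sum⟩ | ⟨j, hj, l, hl, min_j, min_l⟩ :=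
    sum_min_cases Finset.univ (fun j => min (n i j) (k j)) (fun _ => p i / 2)
  · rw [eq_sum]
    exact H.le_sum_min_row hκ i
  · rw [eq_sum]
    linarith [H.half_le_sum_erase_min_row hκ i j]
  · have min_nonneg : ∀ j, 0 ≤ min (min (n i j) (k j)) (p i / 2) := fun j =>
      le_min (le_min (H.nonneg i j) (H.k_nonneg j)) (by linarith [H.p_nonneg i])
    linarith [Finset.add_le_sum (fun j _ => min_nonneg j) hj (Finset.mem_of_mem_erase hl)
      (Finset.ne_of_mem_erase hl).symm]

lemma le_add_sum_erase_min [DecidableEq κ] (H : PairingConditions n p k h)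
    (hκ : Fintype.card κ = 4) (i : ι) (l : κ) :
    p i ≤ k l + ∑ j ∈ Finset.univ.erase l, min (n i j) (p i / 2) := by
  refine (H.one_row_cut hκ i).trans ?_
  rw [← Finset.add_sum_erase _ _ (Finset.mem_univ l)]
  exact add_le_add (min_le_right _ _) (Finset.sum_le_sum fun j _ => min_le_left _ _)

lemma sum_erase_min_half_cases [DecidableEq κ] (H : PairingConditions n p k h) (i : ι) (l : κ) :
    ∑ j ∈ Finset.univ.erase l, min (n i j) (p i / 2) = p i + h - n i l ∨
      (∃ j ≠ l, ∑ j ∈ Finset.univ.erase l, min (n i j) (p i / 2) =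
        p i / 2 + (p i + h - n i l - n i j)) ∨
      p i ≤ ∑ j ∈ Finset.univ.erase l, min (n i j) (p i / 2) := by
  obtain eq_sum | ⟨j, hj, eq_sum⟩ | ⟨j, hj, j', hj', min_j, min_j'⟩ :=
    sum_min_cases (Finset.univ.erase l) (n i) (fun _ => p i / 2)
  · exact Or.inl (eq_sum.trans (H.sum_erase_eq i l))
  · rw [H.sum_erase_erase_eq i hj] at eq_sum
    exact Or.inr (Or.inl ⟨j, Finset.ne_of_mem_erase hj, eq_sum⟩)
  · have min_nonneg : ∀ j, 0 ≤ min (n i j) (p i / 2) := fun j =>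
      le_min (H.nonneg i j) (by linarith [H.p_nonneg i])
    refine Or.inr (Or.inr ?_)
    linarith [Finset.add_le_sum (fun j _ => min_nonneg j) hj (Finset.mem_of_mem_erase hj')
      (Finset.ne_of_mem_erase hj').symm]

lemma add_le_add_sum_erase_min [DecidableEq κ] (H : PairingConditions n p k h)
    (hκ : Fintype.card κ = 4) {i i' : ι} (hi : i ≠ i') (l : κ)
    (hcol : ∀ j, 2 * (n i j + n i' j) ≤ p i + p i' + 2 * h) :
    p i + p i' ≤ k l + ∑ j ∈ Finset.univ.erase l,
      (min (n i j) (p i / 2) + min (n i' j) (p i' / 2)) := by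
  rw [Finset.sum_add_distrib]
  have row_i := H.le_add_sum_erase_min hκ i l
  have row_i' := H.le_add_sum_erase_min hκ i' l
  have col_l := H.entry_add_entry_le hi l
  have h_nonneg := H.h_nonneg
  obtain none | ⟨j, hj, one⟩ | two := H.sum_erase_min_half_cases i l <;>
    obtain none' | ⟨j', hj', one'⟩ | two' := H.sum_erase_min_half_cases i' l <;> try linarith
  · linarith [H.entry_le i' j']
  · linarith [H.entry_le i j]
  · obtain rfl | hjj' := eq_or_ne j j'
    · linarith [hcol j]
    · linarith [H.add_entries_le i i' j j' l hi hjj' hj hj']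

lemma two_rows_cut (H : PairingConditions n p k h) (hι : Fintype.card ι = 3)
    (hκ : Fintype.card κ = 4) {i i' : ι} (hi : i ≠ i') :
    p i + p i' ≤ ∑ j, min (min (n i j) (p i / 2) + min (n i' j) (p i' / 2)) (k j) := by
  classical
  obtain ⟨m, sum_eq⟩ := exists_sum_eq_add_add hι hi
  have col_le : ∀ j, 2 * (n i j + n i' j) ≤ p i + p i' + 2 * h := fun j => by
    have colSum_eq : colSum n j = n i j + n i' j + n m j := sum_eq (n · j)
    linarith [H.add_le_entry m j, H.colSum_le j, sum_eq p]
  have one_row : ∀ i, p i ≤ ∑ j, min (n i j) (p i / 2) := fun i =>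
    (H.one_row_cut hκ i).trans (Finset.sum_le_sum fun j _ => min_le_left _ _)
  refine le_sum_min_of_card_le (m := 2) (t := p m / 2) (by simp [hκ])
    (by linarith [H.p_nonneg m]) (fun j _ => ?_) ?_ ?_
    fun l _ => H.add_le_add_sum_erase_min hκ hi l col_le
  · refine (H.le_sum_min_col hι j).trans ?_
    rw [sum_eq]
    linarith [min_le_right (n m j) (p m / 2)]
  · push_cast
    linarith [H.sum_eq, sum_eq p]
  · rw [Finset.sum_add_distrib]
    exact add_le_add (one_row i) (one_row i')

theorem exists_transport (H : PairingConditions n p k h) (hι : Fintype.card ι = 3)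
    (hκ : Fintype.card κ = 4) :
    ∃ q : Matrix ι κ ℝ, (∀ i j, 0 ≤ q i j ∧ q i j ≤ n i j ∧ 2 * q i j ≤ p i) ∧
      (∀ i, rowSum q i = p i) ∧ ∀ j, colSum q j = k j := by
  classical
  have bound_nonneg : (0 : ι → κ → ℝ) ≤ fun i j => min (n i j) (p i / 2) := fun i j =>
    le_min (H.nonneg i j) (div_nonneg (H.p_nonneg i) zero_le_two)
  obtain ⟨q, ⟨q_nonneg, q_le⟩, hrow, hcol⟩ :=
    exists_transport_of_cut_le bound_nonneg H.sum_eq fun I => by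
      have card_le : I.card ≤ 3 := hι ▸ I.card_le_univ
      interval_cases hI : I.card
      · simp [Finset.card_eq_zero.1 hI, H.k_nonneg]
      · obtain ⟨i, rfl⟩ := Finset.card_eq_one.1 hI
        simpa using H.one_row_cut hκ i
      · obtain ⟨i, i', hi, rfl⟩ := Finset.card_eq_two.1 hI
        simpa [Finset.sum_pair hi] using H.two_rows_cut hι hκ hi
      · rw [(Finset.card_eq_iff_eq_univ I).1 (hI.trans hι.symm)]
        simp only [min_eq_right (H.le_sum_min_col hι _), H.sum_eq, le_refl]
  refine ⟨q, fun i j => ⟨q_nonneg i j, (q_le i j).trans (min_le_left _ _), ?_⟩, hrow, hcol⟩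
  linarith [(q_le i j).trans (min_le_right _ _)]

end PairingConditions

end Pairing

section DominantRow

section PairedRows

variable {n : Type*} [Fintype n] [DecidableEq n] {a : n}

/-- The matrix in which each row `q i` occurs twice, in the rows `a` and `i`. -/
def pairedRows (a : n) (q : Matrix {i // i ≠ a} n ℝ) : Matrix n n ℝ :=
  ∑ i, vecMulVec (Set.indicator ({a, i.1} : Finset n) 1) (q i)

lemma pairedRows_self (q : Matrix {i // i ≠ a} n ℝ) : pairedRows a q a = colSum q := by
  ext j
  simp [pairedRows, colSum, Matrix.sum_apply, vecMulVec_apply]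

lemma pairedRows_coe (q : Matrix {i // i ≠ a} n ℝ) (i : {i // i ≠ a}) :
    pairedRows a q i = q i := by
  ext j
  simp [pairedRows, Matrix.sum_apply, vecMulVec_apply, Set.indicator_apply, i.2, ← Subtype.ext_iff]

lemma colSum_pairedRows (q : Matrix {i // i ≠ a} n ℝ) (j : n) :
    colSum (pairedRows a q) j = colSum q j + colSum q j := by
  rw [colSum, Fintype.sum_eq_add_sum_subtype_ne (pairedRows a q · j) a, pairedRows_self]
  simp only [pairedRows_coe, colSum]

lemma pairedRows_mem_vertexCone {q : Matrix {i // i ≠ a} n ℝ} (hq : ∀ i j, 0 ≤ q i j)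
    (hle : ∀ i j, 2 * q i j ≤ rowSum q i) : pairedRows a q ∈ vertexCone n :=
  Submodule.sum_mem _ fun i _ => vecMulVec_mem_vertexCone
    ⟨_, Finset.card_pair i.2.symm, rfl⟩ (mem_hull_pairIndicators (hq i) (hle i))

lemma mem_vertexCone_of_transport {N : Matrix n n ℝ} {q : Matrix {i // i ≠ a} n ℝ} {h : ℝ}
    (hh : 0 ≤ h) (q_nonneg : ∀ i j, 0 ≤ q i j) (two_mul_le : ∀ i j, 2 * q i j ≤ rowSum q i)
    (q_le : ∀ i j, q i j ≤ N i j) (colSum_le : ∀ j, colSum q j ≤ N a j)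
    (rowSum_self : rowSum N a = total q + h)
    (rowSum_coe : ∀ i : {i // i ≠ a}, rowSum N i = rowSum q i + h)
    (colSum_eq : ∀ j, colSum N j = 2 * colSum q j + h) : N ∈ vertexCone n := by
  rw [← sub_add_cancel N (pairedRows a q)]
  refine add_mem (mem_vertexCone_of_rowSum_eq_colSum_eq (h := h) ?_ hh ?_ ?_)
    (pairedRows_mem_vertexCone q_nonneg two_mul_le)
  · intro i j
    rw [Matrix.sub_apply, sub_nonneg]
    obtain rfl | hi := eq_or_ne i a
    · rw [pairedRows_self]
      exact colSum_le j
    · rw [pairedRows_coe q ⟨i, hi⟩]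
      exact q_le ⟨i, hi⟩ j
  · intro i
    rw [rowSum_sub, sub_eq_iff_eq_add']
    obtain rfl | hi := eq_or_ne i a
    · rw [rowSum_self, rowSum, pairedRows_self, sum_colSum]
    · rw [rowSum_coe ⟨i, hi⟩, rowSum, rowSum, pairedRows_coe q ⟨i, hi⟩]
  · intro j
    rw [colSum_sub, sub_eq_iff_eq_add', colSum_eq, two_mul, colSum_pairedRows]

end PairedRows

/-- Row `a` deviates upwards from the average by at least as much as any row or column deviates
from it. -/
structure IsDominantRow (N : Matrix (Fin 4) (Fin 4) ℝ) (a : Fin 4) : Prop where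
  abs_row_le : ∀ i, |rowSum N i - total N / 4| ≤ rowSum N a - total N / 4
  abs_col_le : ∀ j, |colSum N j - total N / 4| ≤ rowSum N a - total N / 4

namespace FacetInequalities

variable {N : Matrix (Fin 4) (Fin 4) ℝ} {a : Fin 4}

lemma two_mul_add_le_col (H : FacetInequalities N) {i i' : Fin 4} (hi : i ≠ i') (j : Fin 4) :
    2 * N i j + 2 * N i' j ≤ rowSum N i + colSum N j := by
  rw [add_comm (rowSum N i)]
  exact H.corr_transpose_le.two_mul_add_le j hi

lemma add_le_two_mul (H : FacetInequalities N) (i j : Fin 4) :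
    rowSum N i + colSum N j ≤ 2 * N i j + total N / 2 := by
  linarith [H.reflect_nonneg i j, reflect_apply N i j]

lemma rowSum_le_half (H : FacetInequalities N) (i : Fin 4) : rowSum N i ≤ total N / 2 := by
  have : 0 ≤ rowSum (reflect N) i := Finset.sum_nonneg fun j _ => H.reflect_nonneg i j
  linarith [rowSum_reflect N i]

lemma two_mul_le_sub (H : FacetInequalities N) (i j : Fin 4) :
    2 * N i j ≤ colSum N j - rowSum N i + total N / 2 := by
  have reflect_le : reflect N i j ≤ rowSum (reflect N) i :=
    Finset.single_le_sum (fun l _ => H.reflect_nonneg i l) (Finset.mem_univ j)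
  linarith [reflect_apply N i j, rowSum_reflect N i]

lemma sum_deficit (N : Matrix (Fin 4) (Fin 4) ℝ) (a : Fin 4) :
    ∑ i : {i // i ≠ a}, (rowSum N i - (total N / 2 - rowSum N a)) =
      2 * rowSum N a - total N / 2 := by
  have rows := (Fintype.sum_eq_add_sum_subtype_ne (rowSum N) a).symm.trans (sum_rowSum N)
  simp only [ne_eq, Finset.sum_sub_distrib, Finset.sum_const, Finset.card_univ,
    Fintype.card_subtype_compl, Fintype.card_fin, Fintype.card_unique, Nat.add_one_sub_one,
    nsmul_eq_mul, Nat.cast_ofNat]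
  linarith

lemma pairingConditions (H : FacetInequalities N) (ha : IsDominantRow N a) :
    PairingConditions (fun i : {i // i ≠ a} => N i)
      (fun i => rowSum N i - (total N / 2 - rowSum N a))
      (fun j => (colSum N j - (total N / 2 - rowSum N a)) / 2)
      (total N / 2 - rowSum N a) := by
  have sum_p := sum_deficit N a
  have colSum_eq : ∀ j, colSum (fun i : {i // i ≠ a} => N i) j = colSum N j - N a j := fun j =>
    eq_sub_of_add_eq' (Fintype.sum_eq_add_sum_subtype_ne (N · j) a).symm
  have row_ge : ∀ i, total N / 2 - rowSum N a ≤ rowSum N i := fun i => by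
    linarith [(abs_le.1 (ha.abs_row_le i)).1]
  have col_ge : ∀ j, total N / 2 - rowSum N a ≤ colSum N j := fun j => by
    linarith [(abs_le.1 (ha.abs_col_le j)).1]
  constructor
  case nonneg => exact fun i => H.nonneg i
  case p_nonneg => exact fun i => sub_nonneg.2 (row_ge i)
  case k_nonneg => exact fun j => div_nonneg (sub_nonneg.2 (col_ge j)) zero_le_two
  case h_nonneg => exact sub_nonneg.2 (H.rowSum_le_half a)
  case sum_eq =>
    rw [sum_p, ← Finset.sum_div, Finset.sum_sub_distrib, sum_colSum, Finset.sum_const,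
      Finset.card_fin, nsmul_eq_mul, Nat.cast_ofNat]
    ring
  case rowSum_eq => exact fun i => (sub_add_cancel _ _).symm
  case le_colSum =>
    intro j
    linarith [colSum_eq j, H.two_mul_le_sub a j]
  case colSum_le =>
    intro j
    linarith [colSum_eq j, H.add_le_two_mul a j]
  case two_mul_le =>
    intro j
    linarith [(abs_le.1 (ha.abs_col_le j)).2]
  case add_le_entry =>
    intro i j
    linarith [H.add_le_two_mul i j]
  case entry_le =>
    intro i j
    linarith [H.two_mul_add_le_col i.2 j, H.add_le_two_mul a j]
  case add_entry_le_row =>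
    intro i j j' hj
    linarith [H.corr_le.two_mul_add_le i hj]
  case add_entry_le_col =>
    intro i j
    linarith [colSum_eq j, H.two_mul_add_le_col i.2 j]
  case add_entries_le =>
    intro i i' j j' l hi hj hjl hjl'
    linarith [H.corr_le.four_mul_add_le i.2.symm i'.2.symm (Subtype.coe_ne_coe.2 hi) hj hjl hjl']

lemma mem_vertexCone_of_isDominantRow (H : FacetInequalities N) (ha : IsDominantRow N a) :
    N ∈ vertexCone (Fin 4) := by
  have conditions := H.pairingConditions ha
  obtain ⟨q, hq, q_row, q_col⟩ := conditions.exists_transport (by simp) (by simp)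
  have total_q : total q = 2 * rowSum N a - total N / 2 := by
    rw [← sum_rowSum, Fintype.sum_congr _ _ q_row, sum_deficit]
  refine mem_vertexCone_of_transport conditions.h_nonneg (fun i j => (hq i j).1)
    (fun i j => (q_row i).symm ▸ (hq i j).2.2) (fun i j => (hq i j).2.1) (fun j => ?_)
    (by linarith) (fun i => by linarith [q_row i]) (fun j => by linarith [q_col j])
  linarith [q_col j, H.add_le_two_mul a j]

lemma mem_vertexCone_of_forall_abs_le (H : FacetInequalities N)
    (hrow : ∀ i, |rowSum N i - total N / 4| ≤ |rowSum N a - total N / 4|)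
    (hcol : ∀ j, |colSum N j - total N / 4| ≤ |rowSum N a - total N / 4|) :
    N ∈ vertexCone (Fin 4) := by
  obtain habove | hbelow := abs_cases (rowSum N a - total N / 4)
  · exact H.mem_vertexCone_of_isDominantRow
      ⟨fun i => habove.1 ▸ hrow i, fun j => habove.1 ▸ hcol j⟩
  · have deviation_reflect : ∀ x, |total N / 2 - x - total N / 4| = |x - total N / 4| := fun x => by
      rw [← abs_neg]
      ring_nf
    have reflect_dominant : IsDominantRow (reflect N) a := by
      have self_eq : total N / 2 - rowSum N a - total N / 4 = |rowSum N a - total N / 4| := by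
        linarith
      constructor <;> intro i <;>
        simp only [rowSum_reflect, colSum_reflect, total_reflect, deviation_reflect, self_eq, hrow,
          hcol]
    rw [← reflect_reflect N]
    exact reflect_mem_vertexCone (H.reflect.mem_vertexCone_of_isDominantRow reflect_dominant)

theorem mem_vertexCone (H : FacetInequalities N) : N ∈ vertexCone (Fin 4) := by
  obtain ⟨a, ha⟩ := Finite.exists_max fun i => |rowSum N i - total N / 4|
  obtain ⟨b, hb⟩ := Finite.exists_max fun j => |colSum N j - total N / 4|
  obtain hab | hba := le_total |colSum N b - total N / 4| |rowSum N a - total N / 4|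
  · exact H.mem_vertexCone_of_forall_abs_le ha fun j => (hb j).trans hab
  · have transpose_mem : Nᵀ ∈ vertexCone (Fin 4) := by
      refine H.transpose.mem_vertexCone_of_forall_abs_le (a := b) ?_ ?_ <;>
        simp only [rowSum_transpose, colSum_transpose, total_transpose]
      · exact hb
      · exact fun i => (ha i).trans hba
    exact transpose_mem_vertexCone transpose_mem

end FacetInequalities

end DominantRow

section Separability

/-- The expectation `⟨x| P_k ⊗ P_l |x⟩` in an unnormalised two-qubit pure state `x`, where
`P = realPauli`. -/
def pauliExpectation (k l : Fin 4) (x : Q2 → ℂ) : ℂ :=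
  trace (pureMat x * (realPauli k ⊗ₖ realPauli l))

/-- The squared norm of a two-qubit state vector. -/
def sqNorm (x : Q2 → ℂ) : ℝ := ∑ p, normSq (x p)

lemma sqNorm_nonneg (x : Q2 → ℂ) : 0 ≤ sqNorm x := Finset.sum_nonneg fun _ _ => normSq_nonneg _

lemma pauliExpectation_zero_zero (x : Q2 → ℂ) : pauliExpectation 0 0 x = sqNorm x := by
  simp [pauliExpectation, realPauli, pureMat, trace_vecMulVec, sqNorm, dotProduct, mul_conj]

lemma sum_quintuple_normSq_pauliExpectation {l : Fin 4} (hl : l ≠ 0) (x : Q2 → ℂ) :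
    ∑ p ∈ quintuple l, normSq (pauliExpectation p.1 p.2 x) = sqNorm x ^ 2 := by
  simp only [pauliExpectation, sqNorm, trace, diag_apply, Matrix.mul_apply, pureMat,
    vecMulVec_apply, kroneckerMap_apply, Fintype.sum_prod_type, Fin.sum_univ_two]
  fin_cases l
  · exact absurd rfl hl
  · rw [show quintuple _ = {(0, 2), (0, 3), (1, 1), (2, 1), (3, 1)} by decide]
    simp [realPauli, normSq_apply]
    ring
  · rw [show quintuple _ = {(0, 1), (0, 3), (1, 2), (2, 2), (3, 2)} by decide]
    simp [realPauli, normSq_apply]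
    ring
  · rw [show quintuple _ = {(0, 1), (0, 2), (1, 3), (2, 3), (3, 3)} by decide]
    simp [realPauli, normSq_apply]
    ring

lemma sum_normSq_pauliExpectation (x : Q2 → ℂ) :
    ∑ p : Fin 4 × Fin 4, normSq (pauliExpectation p.1 p.2 x) = 4 * sqNorm x ^ 2 := by
  simp only [pauliExpectation, sqNorm, trace, diag_apply, Matrix.mul_apply, pureMat,
    vecMulVec_apply, kroneckerMap_apply, Fintype.sum_prod_type, Fin.sum_univ_two,
    Fin.sum_univ_four]
  simp [realPauli, normSq_apply]
  ring

lemma sum_compl_quintuple_normSq_pauliExpectation {l : Fin 4} (hl : l ≠ 0) (x : Q2 → ℂ) :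
    ∑ p ∈ (quintuple l)ᶜ, normSq (pauliExpectation p.1 p.2 x) = 3 * sqNorm x ^ 2 := by
  linarith [Finset.sum_compl_add_sum (quintuple l) fun p => normSq (pauliExpectation p.1 p.2 x),
    sum_quintuple_normSq_pauliExpectation hl x, sum_normSq_pauliExpectation x]

lemma sum_norm_pauliExpectation_mul_le {s : Finset (Fin 4 × Fin 4)} {c : ℝ} (hc : 0 ≤ c)
    (hs : ∀ x, ∑ p ∈ s, normSq (pauliExpectation p.1 p.2 x) = c * sqNorm x ^ 2) (x y : Q2 → ℂ) :
    ∑ p ∈ s, ‖pauliExpectation p.1 p.2 x‖ * ‖pauliExpectation p.1 p.2 y‖ ≤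
      c * (sqNorm x * sqNorm y) := by
  have cauchy_schwarz := Finset.sum_mul_sq_le_sq_mul_sq s
    (fun p => ‖pauliExpectation p.1 p.2 x‖) (fun p => ‖pauliExpectation p.1 p.2 y‖)
  simp only [← normSq_eq_norm_sq, hs] at cauchy_schwarz
  refine le_of_sq_le_sq (cauchy_schwarz.trans_eq (by ring)) ?_
  exact mul_nonneg hc (mul_nonneg (sqNorm_nonneg x) (sqNorm_nonneg y))

/-- The Bell-diagonal four-qubit matrix `Σ_{ij} r_{ij} Π_i ⊗ Π_j`. -/
def bellDiagonal (r : Matrix (Fin 4) (Fin 4) ℝ) : M16 :=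
  ∑ i, ∑ j, (r i j : ℂ) • (BellProj i ⊗ₖ BellProj j)

lemma trace_reindex_mul_reindex {m n : Type*} [Fintype m] [Fintype n] (e : m ≃ n)
    (A B : Matrix m m ℂ) : trace (reindex e e A * reindex e e B) = trace (A * B) := by
  simp only [reindex_apply, submatrix_mul_equiv]
  exact Equiv.sum_comp e.symm fun i => (A * B) i i

lemma reindex_swapMid_kronecker (A B C D : Matrix (Fin 2) (Fin 2) ℂ) :
    reindex swapMid swapMid ((A ⊗ₖ B) ⊗ₖ (C ⊗ₖ D)) = (A ⊗ₖ C) ⊗ₖ (B ⊗ₖ D) := by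
  ext p q
  simp [swapMid, mul_mul_mul_comm]

lemma trace_bellDiagonal_mul_kronecker (r : Matrix (Fin 4) (Fin 4) ℝ) (F G : M4) :
    trace (bellDiagonal r * (F ⊗ₖ G)) =
      ∑ i, ∑ j, (r i j : ℂ) * (trace (BellProj i * F) * trace (BellProj j * G)) := by
  simp only [bellDiagonal, Finset.sum_mul, trace_sum, smul_mul, trace_smul, smul_eq_mul,
    ← mul_kronecker_mul, trace_kronecker]

lemma invSqrt2_mul_self : invSqrt2 * invSqrt2 = 1 / 2 := by
  rw [invSqrt2, ← ofReal_mul, ← mul_inv, Real.mul_self_sqrt zero_le_two]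
  norm_num

lemma conj_invSqrt2 : (starRingEnd ℂ) invSqrt2 = invSqrt2 := conj_ofReal _

lemma trace_bellProj_mul_realPauli (i k : Fin 4) :
    trace (BellProj i * (realPauli k ⊗ₖ realPauli k)) = character k i := by
  simp only [BellProj, trace, diag_apply, Matrix.mul_apply, vecMulVec_apply, kroneckerMap_apply,
    Fintype.sum_prod_type, Fin.sum_univ_two, Pi.star_apply]
  fin_cases i <;> fin_cases k <;>
    simp [bell, realPauli, character, conj_invSqrt2, invSqrt2_mul_self] <;> norm_num

lemma trace_bellProj (i : Fin 4) : trace (BellProj i) = 1 := by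
  simpa [realPauli, character_zero] using trace_bellProj_mul_realPauli i 0

lemma trace_bellProj_mul_bellProj (i j : Fin 4) :
    trace (BellProj i * BellProj j) = if i = j then 1 else 0 := by
  simp only [BellProj, trace, diag_apply, Matrix.mul_apply, vecMulVec_apply,
    Fintype.sum_prod_type, Fin.sum_univ_two, Pi.star_apply]
  fin_cases i <;> fin_cases j <;>
    simp [bell, conj_invSqrt2, invSqrt2_mul_self] <;> norm_num

/-- The transpose of a bipartite matrix in its second tensor factor. -/
def partialTranspose {m n : Type*} (M : Matrix (m × n) (m × n) ℂ) : Matrix (m × n) (m × n) ℂ :=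
  of fun p q => M (p.1, q.2) (q.1, p.2)

lemma partialTranspose_kronecker {m n : Type*} (A : Matrix m m ℂ) (B : Matrix n n ℂ) :
    partialTranspose (A ⊗ₖ B) = A ⊗ₖ Bᵀ := rfl

lemma partialTranspose_sum {ι m n : Type*} (s : Finset ι)
    (M : ι → Matrix (m × n) (m × n) ℂ) :
    partialTranspose (∑ k ∈ s, M k) = ∑ k ∈ s, partialTranspose (M k) := by
  ext p q
  simp [partialTranspose, Matrix.sum_apply]

lemma trace_partialTranspose_mul {m n : Type*} [Fintype m] [Fintype n]
    (A B : Matrix (m × n) (m × n) ℂ) :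
    trace (partialTranspose A * B) = trace (A * partialTranspose B) := by
  let swapSecond : (m × n) × (m × n) ≃ (m × n) × (m × n) :=
    ⟨fun p => ((p.1.1, p.2.2), (p.2.1, p.1.2)), fun p => ((p.1.1, p.2.2), (p.2.1, p.1.2)),
      fun _ => rfl, fun _ => rfl⟩
  simp only [trace, diag_apply, Matrix.mul_apply, ← Fintype.sum_prod_type']
  exact Fintype.sum_equiv swapSecond _ _ fun _ => rfl

lemma partialTranspose_reindex_swapMid (F G : M4) :
    partialTranspose (reindex swapMid swapMid (F ⊗ₖ G)) =
      reindex swapMid swapMid (partialTranspose F ⊗ₖ partialTranspose G) := rfl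

lemma partialTranspose_bellProj (i : Fin 4) :
    partialTranspose (BellProj i) = (1 / 2 : ℂ) • 1 - BellProj i.rev := by
  ext ⟨a, b⟩ ⟨c, d⟩
  fin_cases i <;> fin_cases a <;> fin_cases b <;> fin_cases c <;> fin_cases d <;>
    simp [partialTranspose, BellProj, vecMulVec_apply, bell, conj_invSqrt2, invSqrt2_mul_self,
      Fin.rev]

lemma trace_bellProj_mul_partialTranspose (i j : Fin 4) :
    trace (BellProj i * partialTranspose (BellProj j)) = reflection i j.rev := by
  rw [partialTranspose_bellProj, Matrix.mul_sub, Matrix.mul_smul, Matrix.mul_one, trace_sub,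
    trace_smul, trace_bellProj, trace_bellProj_mul_bellProj]
  by_cases hij : i = j.rev <;> simp [reflection, hij]

lemma posSemidef_pureMat {n : Type*} [Finite n] (x : n → ℂ) : (pureMat x).PosSemidef :=
  posSemidef_vecMulVec_self_star x

lemma SepAB.posSemidef_partialTranspose {ρ : M16} (h : SepAB ρ) :
    (partialTranspose (reindex swapMid swapMid ρ)).PosSemidef := by
  obtain ⟨n, x, y, hρ⟩ := h
  rw [hρ, partialTranspose_sum]
  refine posSemidef_sum _ fun k _ => ?_
  rw [partialTranspose_kronecker]
  exact (posSemidef_pureMat (x k)).kronecker (posSemidef_pureMat (y k)).transpose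

open scoped MatrixOrder in
lemma trace_mul_nonneg {n : Type*} [Fintype n] {A B : Matrix n n ℂ} (hA : A.PosSemidef)
    (hB : B.PosSemidef) : 0 ≤ trace (A * B) := by
  classical
  obtain ⟨C, rfl⟩ := CStarAlgebra.nonneg_iff_eq_star_mul_self.mp hB.nonneg
  rw [← Matrix.mul_assoc, trace_mul_comm, ← Matrix.mul_assoc]
  exact (hA.mul_mul_conjTranspose_same C).trace_nonneg

lemma reflect_nonneg_of_sepAB {r : Matrix (Fin 4) (Fin 4) ℝ} (h : SepAB (bellDiagonal r))
    (i j : Fin 4) : 0 ≤ reflect r i j := by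
  have nonneg : 0 ≤ trace (partialTranspose (reindex swapMid swapMid (bellDiagonal r)) *
      reindex swapMid swapMid (BellProj i.rev ⊗ₖ BellProj j.rev)) :=
    trace_mul_nonneg h.posSemidef_partialTranspose
      (((posSemidef_pureMat (bell i.rev)).kronecker (posSemidef_pureMat (bell j.rev))).submatrix _)
  have trace_eq : trace (partialTranspose (reindex swapMid swapMid (bellDiagonal r)) *
      reindex swapMid swapMid (BellProj i.rev ⊗ₖ BellProj j.rev)) = (reflect r i j : ℂ) := by
    rw [trace_partialTranspose_mul, partialTranspose_reindex_swapMid, trace_reindex_mul_reindex,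
      trace_bellDiagonal_mul_kronecker]
    simp only [trace_bellProj_mul_partialTranspose, Fin.rev_rev, reflect, Matrix.mul_apply,
      Finset.sum_mul]
    rw [Finset.sum_comm]
    push_cast
    exact Finset.sum_congr rfl fun b _ => Finset.sum_congr rfl fun a _ => by
      rw [show reflection a i = reflection i a from congrFun₂ transpose_reflection i a]
      ring
  rw [trace_eq] at nonneg
  exact_mod_cast nonneg

lemma corr_eq_sum_pauliExpectation {r : Matrix (Fin 4) (Fin 4) ℝ} {n : ℕ} {x y : Fin n → Q2 → ℂ}
    (h : reindex swapMid swapMid (bellDiagonal r) = ∑ m, pureMat (x m) ⊗ₖ pureMat (y m))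
    (k l : Fin 4) :
    (corr r k l : ℂ) = ∑ m, pauliExpectation k l (x m) * pauliExpectation k l (y m) := by
  calc (corr r k l : ℂ)
      = trace (bellDiagonal r *
          ((realPauli k ⊗ₖ realPauli k) ⊗ₖ (realPauli l ⊗ₖ realPauli l))) := by
        rw [trace_bellDiagonal_mul_kronecker, corr_apply]
        push_cast [trace_bellProj_mul_realPauli]
        exact Finset.sum_congr rfl fun i _ => Finset.sum_congr rfl fun j _ => by ring
    _ = trace ((∑ m, pureMat (x m) ⊗ₖ pureMat (y m)) *
          ((realPauli k ⊗ₖ realPauli l) ⊗ₖ (realPauli k ⊗ₖ realPauli l))) := by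
        rw [← h, ← trace_reindex_mul_reindex swapMid, reindex_swapMid_kronecker]
    _ = _ := by
        simp only [Finset.sum_mul, trace_sum, ← mul_kronecker_mul, trace_kronecker,
          pauliExpectation]

lemma sum_abs_corr_le {r : Matrix (Fin 4) (Fin 4) ℝ} (h : SepAB (bellDiagonal r))
    {s : Finset (Fin 4 × Fin 4)} {c : ℝ} (hc : 0 ≤ c)
    (hs : ∀ x, ∑ p ∈ s, normSq (pauliExpectation p.1 p.2 x) = c * sqNorm x ^ 2) :
    ∑ p ∈ s, |corr r p.1 p.2| ≤ c * total r := by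
  obtain ⟨n, x, y, hxy⟩ := h
  have total_eq : total r = ∑ m, sqNorm (x m) * sqNorm (y m) := by
    have corr_eq := corr_eq_sum_pauliExpectation hxy 0 0
    simp only [corr_zero_zero, pauliExpectation_zero_zero] at corr_eq
    exact_mod_cast corr_eq
  have abs_corr_le : ∀ k l, |corr r k l| ≤
      ∑ m, ‖pauliExpectation k l (x m)‖ * ‖pauliExpectation k l (y m)‖ := fun k l => by
    rw [← Real.norm_eq_abs, ← norm_real, corr_eq_sum_pauliExpectation hxy]
    exact (norm_sum_le _ _).trans_eq (by simp only [norm_mul])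
  calc ∑ p ∈ s, |corr r p.1 p.2|
      ≤ ∑ p ∈ s, ∑ m, ‖pauliExpectation p.1 p.2 (x m)‖ * ‖pauliExpectation p.1 p.2 (y m)‖ :=
        Finset.sum_le_sum fun p _ => abs_corr_le p.1 p.2
    _ = ∑ m, ∑ p ∈ s, ‖pauliExpectation p.1 p.2 (x m)‖ * ‖pauliExpectation p.1 p.2 (y m)‖ :=
        Finset.sum_comm
    _ ≤ ∑ m, c * (sqNorm (x m) * sqNorm (y m)) :=
        Finset.sum_le_sum fun m _ => sum_norm_pauliExpectation_mul_le hc hs (x m) (y m)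
    _ = c * total r := by rw [total_eq, Finset.mul_sum]

lemma correlationBounds_of_sepAB {r : Matrix (Fin 4) (Fin 4) ℝ} (h : SepAB (bellDiagonal r)) :
    CorrelationBounds r := by
  intro l hl
  constructor
  · rw [← one_mul (total r)]
    refine sum_abs_corr_le h zero_le_one fun x => ?_
    rw [sum_quintuple_normSq_pauliExpectation hl, one_mul]
  · exact sum_abs_corr_le h zero_le_three (sum_compl_quintuple_normSq_pauliExpectation hl)

lemma bellDiagonal_transpose (r : Matrix (Fin 4) (Fin 4) ℝ) :
    bellDiagonal rᵀ = reindex (Equiv.prodComm _ _) (Equiv.prodComm _ _) (bellDiagonal r) := by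
  ext p q
  simp only [bellDiagonal, reindex_apply, submatrix_apply, Matrix.sum_apply, Matrix.smul_apply,
    kroneckerMap_apply, transpose_apply]
  rw [Finset.sum_comm]
  simp [mul_comm]

lemma SepAB.reindex_prodComm {ρ : M16} (h : SepAB ρ) :
    SepAB (reindex (Equiv.prodComm _ _) (Equiv.prodComm _ _) ρ) := by
  obtain ⟨n, x, y, hρ⟩ := h
  refine ⟨n, fun m => x m ∘ Prod.swap, fun m => y m ∘ Prod.swap, ?_⟩
  ext p q
  have entry := congrFun₂ hρ (p.1.swap, p.2.swap) (q.1.swap, q.2.swap)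
  simp only [Matrix.sum_apply] at entry ⊢
  exact entry

lemma facetInequalities_of_sepAB {r : Matrix (Fin 4) (Fin 4) ℝ} (hpos : ∀ i j, 0 ≤ r i j)
    (h : SepAB (bellDiagonal r)) : FacetInequalities r where
  nonneg := hpos
  reflect_nonneg := reflect_nonneg_of_sepAB h
  corr_le := correlationBounds_of_sepAB h
  corr_transpose_le := by
    refine correlationBounds_of_sepAB ?_
    rw [bellDiagonal_transpose]
    exact h.reindex_prodComm

end Separability

/-- if `r` has nonnegative entries summing to `1` and
`ρ = Σ_{ij} r_{ij} Π_i⊗Π_j` is separable across the partition A = (A',A''),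
B = (B',B''), then `r ∈ 𝒫_s`. -/
theorem stmt10 (r : Matrix (Fin 4) (Fin 4) ℝ)
    (hpos : ∀ i j, 0 ≤ r i j) (hsum : ∑ i, ∑ j, r i j = 1)
    (hsep : SepAB (∑ i, ∑ j, (r i j : ℂ) • (BellProj i ⊗ₖ BellProj j))) :
    r ∈ Ps := by
  have facets : FacetInequalities r := facetInequalities_of_sepAB hpos hsep
  exact mem_Ps_of_mem_vertexCone facets.mem_vertexCone hsum

end Paper
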